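/- Let ε ∈ (0,1) and set η ≡ 6ε/13. Let d ≥ 1 be a real number and let M be a real number with M ≥ 2π√(3(d+1))/η². Let A and E be real numbers with 0 ≤ A ≤ 1, 0 ≤ E ≤ 2/(d+1), and A ≤ E + 1/(η²(d+1)). Then 2π√(A(1−A))/M + π²/M² ≤ ε/(2(d+1)). -/

import Mathlib

/-! With `D = d + 1`, `s = √(3D)` and `u = π / M`, the bound on `M` says `u ≤ η² / (2s)`. Since
`η < 1`, the bounds on `A` give `A ≤ (2 + 1/η²) / D ≤ 3 / (η² D) = (s / (η D))²`, so
`√(A(1 - A)) ≤ s / (η D)` and the first term is at most `η / D`. The second is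
`u² ≤ η⁴ / (12 D) ≤ η / (12 D)`, and the two bounds add up to `13 η / (12 D) = ε / (2 D)`. -/


/-- The deterministic inequality chain of the performance-guarantee proof: if
`M ≥ 2π√(3(d+1))/η²` with `η = 6ε/13`, `0 ≤ A ≤ 1`, `0 ≤ E ≤ 2/(d+1)` and
`A ≤ E + 1/(η²(d+1))`, then `2π√(A(1−A))/M + π²/M² ≤ ε/(2(d+1))`. -/
theorem qae_error_threshold_bound
    (ε : ℝ) (hε0 : 0 < ε) (hε1 : ε < 1) (η : ℝ) (hη : η = 6 * ε / 13)
    (d : ℝ) (hd : 1 ≤ d) (M : ℝ)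
    (hM : 2 * Real.pi * Real.sqrt (3 * (d + 1)) / η ^ 2 ≤ M)
    (A E : ℝ) (hA0 : 0 ≤ A) (hA1 : A ≤ 1)
    (hE0 : 0 ≤ E) (hE1 : E ≤ 2 / (d + 1))
    (hAE : A ≤ E + 1 / (η ^ 2 * (d + 1))) :
    2 * Real.pi * Real.sqrt (A * (1 - A)) / M + Real.pi ^ 2 / M ^ 2
      ≤ ε / (2 * (d + 1)) := by
  have hη0 : 0 < η := by rw [hη]; positivity
  have hη1 : η < 1 := by rw [hη]; linarith
  have hD : 0 < d + 1 := by linarith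
  have hpi := Real.pi_pos
  obtain ⟨s, hs⟩ : ∃ s, s = Real.sqrt (3 * (d + 1)) := ⟨_, rfl⟩
  have hs0 : 0 < s := by rw [hs]; positivity
  have hs2 : s ^ 2 = 3 * (d + 1) := by rw [hs]; exact Real.sq_sqrt (by positivity)
  rw [← hs] at hM
  have hM0 : 0 < M := lt_of_lt_of_le (by positivity) hM
  have hu : Real.pi / M ≤ η ^ 2 / (2 * s) := by
    rw [div_le_iff₀ (by positivity)] at hM
    rw [div_le_div_iff₀ hM0 (by positivity)]
    linarith
  have hA : A ≤ (s / (η * (d + 1))) ^ 2 := by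
    have h1 : (s / (η * (d + 1))) ^ 2 = 2 / (η ^ 2 * (d + 1)) + 1 / (η ^ 2 * (d + 1)) := by
      rw [div_pow, hs2]
      field_simp
      norm_num
    have h2 : 2 / (d + 1) ≤ 2 / (η ^ 2 * (d + 1)) := by
      apply div_le_div_of_nonneg_left (by norm_num) (by positivity)
      exact mul_le_of_le_one_left hD.le (pow_le_one₀ hη0.le hη1.le)
    linarith
  have hsqrt : Real.sqrt (A * (1 - A)) ≤ s / (η * (d + 1)) := by
    apply Real.sqrt_le_iff.mpr
    exact ⟨by positivity, by nlinarith⟩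
  have hfirst : 2 * Real.pi * Real.sqrt (A * (1 - A)) / M ≤ η / (d + 1) := by
    calc 2 * Real.pi * Real.sqrt (A * (1 - A)) / M
        = 2 * (Real.pi / M * Real.sqrt (A * (1 - A))) := by ring
      _ ≤ 2 * (η ^ 2 / (2 * s) * (s / (η * (d + 1)))) := by gcongr
      _ = η / (d + 1) := by field_simp
  have hsecond : Real.pi ^ 2 / M ^ 2 ≤ η / (12 * (d + 1)) := by
    calc Real.pi ^ 2 / M ^ 2 = (Real.pi / M) ^ 2 := by rw [div_pow]
      _ ≤ (η ^ 2 / (2 * s)) ^ 2 := by gcongr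
      _ = η ^ 4 / (12 * (d + 1)) := by
        rw [div_pow, mul_pow, hs2]
        ring
      _ ≤ η / (12 * (d + 1)) := by
        gcongr
        exact pow_le_of_le_one hη0.le hη1.le (by norm_num)
  have hsum : η / (d + 1) + η / (12 * (d + 1)) = ε / (2 * (d + 1)) := by
    rw [hη]
    field_simp
    norm_num
  linarith
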